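/- For every T ⊆ 𝔹 and every β ∈ 𝔹 − T: L_{T,β}(g_β) > 0, and L_{T,β}(g_τ) = 0 for every τ ∈ 𝔹 with τ ≠ β. -/

import Mathlib

/- Setting: `B` is the finite nonempty set 𝔹 equipped with a permutation `σ` (Frobenius),
and `p` is a prime.  Weights live in `ℚ^𝔹 = (B → ℚ)`.  The orbits `𝔹_𝔭` of `σ` are the sets
`orbit σ β`, and for `T ⊆ 𝔹` we have `T_𝔭 = T ∩ orbit σ β`. -/

open scoped Classical

noncomputable section

namespace GO

variable {B : Type*} [Fintype B] [DecidableEq B]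

/-- The standard basis vector `e_β` of `ℚ^𝔹`. -/
def e (β : B) : B → ℚ := fun τ => if τ = β then 1 else 0

/-- `β'` lies in the `σ`-orbit of `β`. -/
def sameOrbit (σ : Equiv.Perm B) (β β' : B) : Prop := ∃ n : ℕ, (σ ^ n) β = β'

/-- The `σ`-orbit `𝔹_𝔭` of `β`. -/
def orbit (σ : Equiv.Perm B) (β : B) : Set B := {τ | sameOrbit σ β τ}

/-- `|𝔹_𝔭|`, the cardinality of the orbit of `β`. -/
def orbitCard (σ : Equiv.Perm B) (β : B) : ℕ := (orbit σ β).ncard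

/-- For `β`, `β'` in the same orbit: the unique `n` with `0 < n ≤ |𝔹_𝔭|` and `σ^n β' = β`,
realized as the least positive `n` with `σ^n β' = β`. -/
def steps (σ : Equiv.Perm B) (β' β : B) : ℕ := sInf {n : ℕ | 0 < n ∧ (σ ^ n) β' = β}

/-- For `β`, `β'` in the same orbit: the unique `n` with `0 ≤ n < |𝔹_𝔭|` and `σ^n β = β'`. -/
def steps0 (σ : Equiv.Perm B) (β β' : B) : ℕ := sInf {n : ℕ | (σ ^ n) β = β'}

/-- `h_β^{β'} = -e_β + p^n e_{β'}` where `β = σ^n β'` with `0 < n ≤ |𝔹_𝔭|`. -/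
def hvec (σ : Equiv.Perm B) (p : ℕ) (β β' : B) : B → ℚ :=
  -(e β) + ((p : ℚ) ^ steps σ β' β) • e β'

/-- `b_β^{β'} = e_β + p^n e_{β'}` where `β = σ^n β'` with `0 < n ≤ |𝔹_𝔭|`. -/
def bvec (σ : Equiv.Perm B) (p : ℕ) (β β' : B) : B → ℚ :=
  (e β) + ((p : ℚ) ^ steps σ β' β) • e β'

/-- `h_β = -e_β + p e_{σ⁻¹ β}`. -/
def hsimple (σ : Equiv.Perm B) (p : ℕ) (β : B) : B → ℚ := -(e β) + (p : ℚ) • e (σ⁻¹ β)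

/-- `b_β = e_β + p e_{σ⁻¹ β}`. -/
def bsimple (σ : Equiv.Perm B) (p : ℕ) (β : B) : B → ℚ := (e β) + (p : ℚ) • e (σ⁻¹ β)

/-- The `ℚ^{≥0}`-cone generated by a set `S` of vectors: all finite nonnegative rational
linear combinations of elements of `S`. -/
def cone {V : Type*} [AddCommMonoid V] [Module ℚ V] (S : Set V) : Set V :=
  {x | ∃ (n : ℕ) (c : Fin n → ℚ) (v : Fin n → V),
    (∀ i, 0 ≤ c i) ∧ (∀ i, v i ∈ S) ∧ x = ∑ i, c i • v i}

/-- A chain in `T` (automatically contained in a single orbit, so this is the notion of a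
chain in `T_𝔭` for `T_𝔭 ⊊ 𝔹_𝔭`): `C = {σ^{-i}β : 0 ≤ i ≤ m} ⊆ T` with `σβ ∉ T` and
`σ^{-m-1}β ∉ T`. -/
def IsChainIn (σ : Equiv.Perm B) (T : Set B) (C : Set B) : Prop :=
  ∃ (β : B) (m : ℕ), σ β ∉ T ∧ (σ⁻¹ ^ (m + 1)) β ∉ T ∧
    (∀ i ≤ m, (σ⁻¹ ^ i) β ∈ T) ∧ C = {τ | ∃ i ≤ m, τ = (σ⁻¹ ^ i) β}

/-- `C̃` for a chain `C`: equals `C` if `m` is odd (i.e. `|C| = m+1` is even), and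
`C ∪ {σ^{-m-1}β} = C ∪ σ⁻¹(C)` if `m` is even (i.e. `|C|` odd). -/
def chainExt (σ : Equiv.Perm B) (C : Set B) : Set B :=
  if Odd C.ncard then C ∪ (⇑σ⁻¹ '' C) else C

/-- `T̃ = ⋃_𝔭 T̃_𝔭`: the union of `T` with the extensions `C̃` of all chains `C` in `T`.
(For orbits with `T_𝔭 = 𝔹_𝔭` there are no chains and `T̃_𝔭 = 𝔹_𝔭 = T_𝔭`.) -/
def tilde (σ : Equiv.Perm B) (T : Set B) : Set B :=
  T ∪ ⋃ (C : Set B) (_ : IsChainIn σ T C), chainExt σ C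

/-- `μ_β`: the least `i > 0` with `σ^i β ∉ T` if `T_𝔭 ≠ 𝔹_𝔭`, and `0` if `T_𝔭 = 𝔹_𝔭`. -/
def mu (σ : Equiv.Perm B) (T : Set B) (β : B) : ℕ :=
  if orbit σ β ⊆ T then 0 else sInf {i : ℕ | 0 < i ∧ (σ ^ i) β ∉ T}

/-- `n_β`: the least `i > 0` with `σ^i β ∉ T̃` (meaningful when `T̃_𝔭 ≠ 𝔹_𝔭`). -/
def nn (σ : Equiv.Perm B) (T : Set B) (β : B) : ℕ :=
  sInf {i : ℕ | 0 < i ∧ (σ ^ i) β ∉ tilde σ T}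

/-- `ν_β`: the least `i ≥ 0` with `σ^{-i} β ∉ T` (meaningful when `T_𝔭 ≠ 𝔹_𝔭`). -/
def nu (σ : Equiv.Perm B) (T : Set B) (β : B) : ℕ :=
  sInf {i : ℕ | (σ⁻¹ ^ i) β ∉ T}

/-- `𝒯(T_𝔭) = (𝔹_𝔭 − T̃_𝔭) ∪ σ(T̃_𝔭 − T_𝔭)`, taken globally (union over all `𝔭`). -/
def Tscr (σ : Equiv.Perm B) (T : Set B) : Set B :=
  (tilde σ T)ᶜ ∪ (⇑σ '' (tilde σ T \ T))

/-- The generating set `⋃_𝔭 𝒢(T_𝔭)`: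
`{h_β^{β'} : β ∈ ℋ(T_𝔭), β' ∈ 𝒯(T_𝔭)} ∪ {±b_β : β ∈ T_𝔭}` over all `𝔭`. -/
def Dgen (σ : Equiv.Perm B) (p : ℕ) (T : Set B) : Set (B → ℚ) :=
  {v | ∃ β β', β ∉ T ∧ β' ∈ Tscr σ T ∧ sameOrbit σ β β' ∧ v = hvec σ p β β'}
  ∪ {v | ∃ β ∈ T, v = bsimple σ p β ∨ v = -(bsimple σ p β)}

/-- The cone `𝒟_T`. -/
def D (σ : Equiv.Perm B) (p : ℕ) (T : Set B) : Set (B → ℚ) := cone (Dgen σ p T)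

/-- `h_{σ^{n_β}β}^{β} = -e_{σ^{n_β}β} + p^{n_β} e_β`. -/
def fH (σ : Equiv.Perm B) (p : ℕ) (T : Set B) (β : B) : B → ℚ :=
  -(e ((σ ^ nn σ T β) β)) + ((p : ℚ) ^ nn σ T β) • e β

/-- `b_{σ^{n_β}β}^{β} = e_{σ^{n_β}β} + p^{n_β} e_β`. -/
def fB (σ : Equiv.Perm B) (p : ℕ) (T : Set B) (β : B) : B → ℚ :=
  (e ((σ ^ nn σ T β) β)) + ((p : ℚ) ^ nn σ T β) • e β

/-- The generating set `⋃_𝔭 𝒢′(T_𝔭)`: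
if `𝔹_𝔭 − T̃_𝔭 ≠ ∅` it is `{h_{σ^{n_β}β}^β : β ∈ 𝔹_𝔭 − T̃_𝔭} ∪ {−b_{σ^{n_β}β}^β : β ∈ T̃_𝔭 − T_𝔭}
∪ {±b_β : β ∈ T_𝔭}`, and if `𝔹_𝔭 = T̃_𝔭` it is `{−e_β : β ∈ 𝔹_𝔭 − T_𝔭} ∪ {±b_β : β ∈ T_𝔭}`. -/
def D'gen (σ : Equiv.Perm B) (p : ℕ) (T : Set B) : Set (B → ℚ) :=
  {v | ∃ β, β ∉ tilde σ T ∧ v = fH σ p T β}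
  ∪ {v | ∃ β, β ∈ tilde σ T ∧ β ∉ T ∧ ¬ orbit σ β ⊆ tilde σ T ∧ v = -(fB σ p T β)}
  ∪ {v | ∃ β, β ∉ T ∧ orbit σ β ⊆ tilde σ T ∧ v = -(e β)}
  ∪ {v | ∃ β ∈ T, v = bsimple σ p β ∨ v = -(bsimple σ p β)}

/-- The cone `𝒟′_T`. -/
def D' (σ : Equiv.Perm B) (p : ℕ) (T : Set B) : Set (B → ℚ) := cone (D'gen σ p T)

/-- `f_β(T)` for `β ∉ T`: `h_{σ^{n_β}β}^β` if `β ∈ 𝔹_𝔭 − T̃_𝔭`; `−b_{σ^{n_β}β}^β` if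
`β ∈ T̃_𝔭 − T_𝔭` and `𝔹_𝔭 ≠ T̃_𝔭`; and `−(1+p^{|𝔹_𝔭|}) e_β` if `𝔹_𝔭 = T̃_𝔭`. -/
def fvec (σ : Equiv.Perm B) (p : ℕ) (T : Set B) (β : B) : B → ℚ :=
  if orbit σ β ⊆ tilde σ T then -((1 + (p : ℚ) ^ orbitCard σ β) • e β)
  else if β ∈ tilde σ T then -(fB σ p T β) else fH σ p T β

/-- `𝔹(T) = ⋃_𝔭 𝔹_𝔭(T)`: `β ∈ 𝔹(T)` iff `β ∉ T`, the set `𝔹_𝔭 − T̃_𝔭` is nonempty, and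
`𝔹_𝔭 − T̃_𝔭 ≠ {β}` (this encodes all three cases of the definition of `𝔹_𝔭(T)`). -/
def BT (σ : Equiv.Perm B) (T : Set B) : Set B :=
  {β | β ∉ T ∧ (orbit σ β \ tilde σ T).Nonempty ∧ orbit σ β \ tilde σ T ≠ {β}}

/-- The sign function `ε_T : 𝔹 → {−1,0,1}`. -/
def epsT (σ : Equiv.Perm B) (T : Set B) (β : B) : ℚ :=
  if orbit σ β ⊆ T then 0
  else if β ∈ tilde σ T then (-1 : ℚ) ^ (mu σ T β - 1) else 1

/-- `L^ε[β, β'](κ) = Σ_{0 ≤ i ≤ n} ε(σ^iβ) p^i k_{σ^iβ}`, where `β' = σ^n β` with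
`0 ≤ n < |𝔹_𝔭|`. -/
def Lfun (σ : Equiv.Perm B) (p : ℕ) (ε : B → ℚ) (β β' : B) (κ : B → ℚ) : ℚ :=
  ∑ i ∈ Finset.range (steps0 σ β β' + 1), ε ((σ ^ i) β) * (p : ℚ) ^ i * κ ((σ ^ i) β)

/-- `L^ε[β] = L^ε[β, σ⁻¹β]`. -/
def Lfun1 (σ : Equiv.Perm B) (p : ℕ) (ε : B → ℚ) (β : B) (κ : B → ℚ) : ℚ :=
  Lfun σ p ε β (σ⁻¹ β) κ

/-- `L_{T,β}` for `β ∈ 𝔹 − T`: `L^{ε_T}[σ^{μ_β}β]` if `β ∈ 𝔹 − T̃`, and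
`L^{ε_T}[β, σ^{μ_β−1}β]` if `β ∈ T̃ − T`. -/
def LT (σ : Equiv.Perm B) (p : ℕ) (T : Set B) (β : B) (κ : B → ℚ) : ℚ :=
  if β ∈ tilde σ T then Lfun σ p (epsT σ T) β ((σ ^ (mu σ T β - 1)) β) κ
  else Lfun1 σ p (epsT σ T) ((σ ^ mu σ T β) β) κ

/-- `ε_{T,f_β}`: negates `ε_T` on `{β, σβ, …, σ^{μ_β−1}β}`. -/
def epsTf (σ : Equiv.Perm B) (T : Set B) (β τ : B) : ℚ :=
  if ∃ i < mu σ T β, τ = (σ ^ i) β then -(epsT σ T τ) else epsT σ T τ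

/-- `L_{T,f_β,τ}` for `β ∈ 𝔹(T)` and `τ ∈ 𝔹 − (T ∪ {σ^{n_β}β})`, with `β′ = σ^{n_β}β` and
`β̃ = σ^{μ_{β′}}β′`. -/
def LTf (σ : Equiv.Perm B) (p : ℕ) (T : Set B) (β τ : B) (κ : B → ℚ) : ℚ :=
  if τ = β then
    (if β ∈ tilde σ T then
      Lfun1 σ p (epsTf σ T β) ((σ ^ mu σ T ((σ ^ nn σ T β) β)) ((σ ^ nn σ T β) β)) κ
    else
      Lfun σ p (epsTf σ T β) β (σ⁻¹ ((σ ^ mu σ T ((σ ^ nn σ T β) β)) ((σ ^ nn σ T β) β))) κ)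
  else
    (if τ ∈ tilde σ T then LT σ p T τ κ
     else Lfun1 σ p (epsTf σ T β) ((σ ^ mu σ T τ) τ) κ)

/-- `𝒟_{T,f_β} = {κ : L_{T,f_β,τ}(κ) ≥ 0 for all τ ∈ 𝔹 − (T ∪ {σ^{n_β}β})}`. -/
def Df (σ : Equiv.Perm B) (p : ℕ) (T : Set B) (β : B) : Set (B → ℚ) :=
  {κ | ∀ τ, τ ∉ T → τ ≠ (σ ^ nn σ T β) β → 0 ≤ LTf σ p T β τ κ}

/-- `i_T : ℚ^𝔹 → ℚ^{𝔹−T}`, the linear map with `i_T(e_β) = 0` if `T_𝔭 = 𝔹_𝔭` and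
`i_T(e_β) = (−p)^{ν_β} e_{σ^{−ν_β}β}` otherwise. -/
def iT (σ : Equiv.Perm B) (p : ℕ) (T : Set B) (κ : B → ℚ) : {β : B // β ∉ T} → ℚ :=
  fun β₀ => ∑ β : B, κ β *
    (if orbit σ β ⊆ T then 0
     else if (σ⁻¹ ^ nu σ T β) β = β₀.1 then (-(p : ℚ)) ^ nu σ T β else 0)

/-- Restriction to `ℚ^{𝔹−T}` of a vector of `ℚ^𝔹` (used for vectors supported on `𝔹 − T`). -/
def res (T : Set B) (v : B → ℚ) : {β : B // β ∉ T} → ℚ := fun β => v β.1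

/-- The generating set `𝒢^{T-red}(T) = ⋃_𝔭 𝒢_𝔭^{T-red}(T)` of the reduced cone. -/
def Gred (σ : Equiv.Perm B) (p : ℕ) (T : Set B) : Set ({β : B // β ∉ T} → ℚ) :=
  {v | ∃ β, β ∉ tilde σ T ∧ v = res T (fH σ p T β)}
  ∪ {v | ∃ β, β ∈ tilde σ T ∧ β ∉ T ∧ ¬ orbit σ β ⊆ tilde σ T ∧ v = res T (-(fB σ p T β))}
  ∪ {v | ∃ β, β ∉ T ∧ orbit σ β ⊆ tilde σ T ∧ v = res T (-(e β))}

/-- The minimal cone `𝒞^min_T = i_T(𝒟_T ∩ ⋂_{β ∈ 𝔹(T)} 𝒟_{T,f_β}) ⊆ ℚ^{𝔹−T}`. -/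
def Cmin (σ : Equiv.Perm B) (p : ℕ) (T : Set B) : Set ({β : B // β ∉ T} → ℚ) :=
  iT σ p T '' (D σ p T ∩ {κ | ∀ β ∈ BT σ T, κ ∈ Df σ p T β})

/-- `g_β`: `b_β` if `β ∈ T_𝔭`; `−e_β` if `β ∈ T̃_𝔭 − T_𝔭` and `𝔹_𝔭 = T̃_𝔭`;
`−b_{σ^{n_β}β}^β` if `β ∈ T̃_𝔭 − T_𝔭` and `𝔹_𝔭 ≠ T̃_𝔭`; `h_{σ^{n_β}β}^β` if `β ∈ 𝔹_𝔭 − T̃_𝔭`. -/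
def gvec (σ : Equiv.Perm B) (p : ℕ) (T : Set B) (β : B) : B → ℚ :=
  if β ∈ T then bsimple σ p β
  else if orbit σ β ⊆ tilde σ T then -(e β)
  else if β ∈ tilde σ T then -(fB σ p T β)
  else fH σ p T β

/-- The map `σ̄ : β ↦ σ^{n_β} β`. -/
def sigbar (σ : Equiv.Perm B) (T : Set B) (β : B) : B := (σ ^ nn σ T β) β

/-- `h_β = -e_β + p e_{σ⁻¹β}` as an element of `ℤ^𝔹`. -/
def hZ (σ : Equiv.Perm B) (p : ℕ) (β : B) : B → ℤ :=
  fun τ => (if τ = β then -1 else 0) + (if τ = σ⁻¹ β then (p : ℤ) else 0)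

end GO

end

/-!
Every functional `L_{T,β}` is a sum `∑_{i < n} ε_T(σ^i x) p^i k_{σ^i x}` over a segment of an orbit,
with `x ∉ T` and `σ^n x ∉ T`: for `β ∈ T̃` it starts at `x = β` and has length `n = μ_β`; for
`β ∉ T̃` it starts at `x = σ^{μ_β} β` and runs once around the orbit. Since `ε_T` changes sign
whenever `σ` enters a point of `T`, the two terms of `b_τ`, `τ ∈ T`, cancel in such a sum.

The parity description `β ∈ T̃ ↔ μ_β` even (for `β ∉ T`) shows that `ε_T` is `-1` on `T̃ - T` and
`1` off `T̃`, so the vectors `g_τ` with `τ ∉ T` and `𝔹_𝔭 ≠ T̃_𝔭` all have the form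
`ε_T(τ) p^{n_τ} e_τ - e_{σ^{n_τ} τ}`. If `β ∈ T̃`, then `β` is the only point of the segment outside
`T`, and only `g_β` is seen. If `β ∉ T̃`, then `β` is the last point of the segment outside `T`, so
for `τ ≠ β` the step from `τ` to `σ^{n_τ} τ` stays inside the segment and `g_τ` telescopes to `0`;
the step from `β` wraps around, and `p > 1` makes the surviving difference of powers of `p`
positive.
-/

namespace GO

open Function Set

variable {B : Type*} {σ : Equiv.Perm B} {S T : Set B} {x y z β τ : B} {i j m n : ℕ}

/-! ### Orbits -/

lemma self_mem_orbit (σ : Equiv.Perm B) (x : B) : x ∈ orbit σ x := ⟨0, rfl⟩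

lemma injOn_pow_apply_Iio (h : ∀ i, 0 < i → i < n → (σ ^ i) x ≠ (σ ^ n) x) :
    InjOn (fun i ↦ (σ ^ i) x) (Iio n) := by
  have ne_of_lt : ∀ i j, i < j → j < n → (σ ^ i) x ≠ (σ ^ j) x := by
    intro i j hij hjn heq
    refine h (n - j + i) (by omega) (by omega) ?_
    rw [pow_add, Equiv.Perm.mul_apply, heq, ← Equiv.Perm.mul_apply, ← pow_add,
      Nat.sub_add_cancel hjn.le]
  intro i hi j hj heq
  rcases lt_trichotomy i j with hij | hij | hij
  · exact absurd heq (ne_of_lt i j hij hj)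
  · exact hij
  · exact absurd heq.symm (ne_of_lt j i hij hi)

lemma pow_minimalPeriod_apply (σ : Equiv.Perm B) (x : B) : (σ ^ minimalPeriod σ x) x = x := by
  rw [← Equiv.Perm.iterate_eq_pow, iterate_minimalPeriod]

lemma injOn_pow_apply_Iio_minimalPeriod (σ : Equiv.Perm B) (x : B) :
    InjOn (fun i ↦ (σ ^ i) x) (Iio (minimalPeriod σ x)) := by
  simpa only [Equiv.Perm.iterate_eq_pow] using iterate_injOn_Iio_minimalPeriod (f := σ) (x := x)

lemma minimalPeriod_pow_apply (hx : x ∈ periodicPts σ) (n : ℕ) :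
    minimalPeriod σ ((σ ^ n) x) = minimalPeriod σ x := by
  rw [← Equiv.Perm.iterate_eq_pow, minimalPeriod_apply_iterate hx]

lemma exists_lt_minimalPeriod_pow_apply_eq (hx : x ∈ periodicPts σ) (hxy : σ.SameCycle x y) :
    ∃ i < minimalPeriod σ x, (σ ^ i) x = y := by
  obtain ⟨k, rfl⟩ := hxy
  have hN : (0 : ℤ) < minimalPeriod σ x := mod_cast minimalPeriod_pos_of_mem_periodicPts hx
  obtain ⟨i, hi⟩ := Int.eq_ofNat_of_zero_le (Int.emod_nonneg k hN.ne')
  have hlt := Int.emod_lt_of_pos k hN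
  refine ⟨i, by omega, ?_⟩
  have hround : ((σ ^ minimalPeriod σ x) ^ (k / minimalPeriod σ x)) x = x :=
    Equiv.Perm.zpow_apply_eq_self_of_apply_eq_self (pow_minimalPeriod_apply σ x) _
  rw [← Int.emod_add_mul_ediv k (minimalPeriod σ x), hi, zpow_add, zpow_mul, Equiv.Perm.mul_apply,
    zpow_natCast, zpow_natCast, hround]

/-! ### First exit times -/

/-- The least `i > 0` with `σ^i x ∉ S`, which is `μ_x` for `S = T` and `n_x` for `S = T̃`.
The value is `0` when there is no such `i`. -/
noncomputable def firstExit (σ : Equiv.Perm B) (S : Set B) (x : B) : ℕ :=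
  sInf {i | 0 < i ∧ (σ ^ i) x ∉ S}

lemma mu_eq_firstExit (σ : Equiv.Perm B) (T : Set B) (β : B) : mu σ T β = firstExit σ T β := by
  rw [mu, firstExit]
  split_ifs with h
  · have hempty : {i | 0 < i ∧ (σ ^ i) β ∉ T} = ∅ :=
      eq_empty_of_forall_notMem fun i hi ↦ hi.2 (h ⟨i, rfl⟩)
    rw [hempty, Nat.sInf_empty]
  · rfl

lemma firstExit_le (hi : 0 < i) (h : (σ ^ i) x ∉ S) : firstExit σ S x ≤ i := Nat.sInf_le ⟨hi, h⟩

lemma firstExit_pos (hi : 0 < i) (h : (σ ^ i) x ∉ S) : 0 < firstExit σ S x :=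
  (Nat.sInf_mem (s := {i | 0 < i ∧ (σ ^ i) x ∉ S}) ⟨i, hi, h⟩).1

lemma pow_apply_mem_of_lt_firstExit (hi : 0 < i) (h : i < firstExit σ S x) : (σ ^ i) x ∈ S := by
  by_contra hS
  exact h.not_ge (firstExit_le hi hS)

lemma pow_firstExit_apply_notMem (h : ¬ orbit σ x ⊆ S) : (σ ^ firstExit σ S x) x ∉ S := by
  obtain hempty | hne := {i | 0 < i ∧ (σ ^ i) x ∉ S}.eq_empty_or_nonempty
  · obtain ⟨_, ⟨i, rfl⟩, hi⟩ := not_subset.1 h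
    have hi0 : i = 0 := by
      by_contra hi0
      exact hempty.subset ⟨Nat.pos_of_ne_zero hi0, hi⟩
    rwa [firstExit, hempty, Nat.sInf_empty, ← hi0]
  · exact (Nat.sInf_mem hne).2

lemma firstExit_eq (hn : 0 < n) (hS : (σ ^ n) x ∉ S) (h : ∀ i, 0 < i → i < n → (σ ^ i) x ∈ S) :
    firstExit σ S x = n := by
  refine (firstExit_le hn hS).antisymm (not_lt.1 fun hlt ↦ ?_)
  exact pow_firstExit_apply_notMem (fun hsub ↦ hS (hsub ⟨n, rfl⟩)) (h _ (firstExit_pos hn hS) hlt)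

lemma firstExit_pos_of_mem (hx : x ∈ S) (h : ¬ orbit σ x ⊆ S) : 0 < firstExit σ S x := by
  rw [Nat.pos_iff_ne_zero]
  intro h0
  have := pow_firstExit_apply_notMem h
  rw [h0] at this
  exact this hx

lemma firstExit_eq_firstExit_apply_add_one (hz : σ z ∈ S) (h : ¬ orbit σ (σ z) ⊆ S) :
    firstExit σ S z = firstExit σ S (σ z) + 1 := by
  refine firstExit_eq (Nat.succ_pos _) ?_ fun i hi hlt ↦ ?_
  · rw [pow_succ, Equiv.Perm.mul_apply]
    exact pow_firstExit_apply_notMem h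
  · obtain ⟨j, rfl⟩ := Nat.exists_eq_add_one_of_ne_zero hi.ne'
    rw [pow_succ, Equiv.Perm.mul_apply]
    obtain rfl | hj := Nat.eq_zero_or_pos j
    · exact hz
    · exact pow_apply_mem_of_lt_firstExit hj (by omega)

lemma injOn_pow_apply_Iio_mu (hβ : β ∉ T) : InjOn (fun i ↦ (σ ^ i) β) (Iio (mu σ T β)) := by
  rw [mu_eq_firstExit]
  exact injOn_pow_apply_Iio fun _ hi hlt heq ↦
    pow_firstExit_apply_notMem (fun h ↦ hβ (h (self_mem_orbit σ β)))
      (heq ▸ pow_apply_mem_of_lt_firstExit hi hlt)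

lemma mu_pos (hper : β ∈ periodicPts σ) (hβ : β ∉ T) : 0 < mu σ T β := by
  rw [mu_eq_firstExit]
  exact firstExit_pos (minimalPeriod_pos_of_mem_periodicPts hper)
    (by rwa [pow_minimalPeriod_apply])

lemma mu_le_minimalPeriod (hper : β ∈ periodicPts σ) (hβ : β ∉ T) :
    mu σ T β ≤ minimalPeriod σ β := by
  rw [mu_eq_firstExit]
  exact firstExit_le (minimalPeriod_pos_of_mem_periodicPts hper)
    (by rwa [pow_minimalPeriod_apply])

lemma exists_pow_add_mu_apply_eq (hper : β ∈ periodicPts σ) (hτ : τ ∉ T) (hne : τ ≠ β)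
    (h : σ.SameCycle β τ) :
    ∃ j, j + mu σ T β < minimalPeriod σ β ∧ (σ ^ (j + mu σ T β)) β = τ := by
  obtain ⟨i, hi, rfl⟩ := exists_lt_minimalPeriod_pow_apply_eq hper h
  have hi0 : 0 < i := Nat.pos_of_ne_zero fun h0 ↦ hne (by rw [h0, pow_zero, Equiv.Perm.one_apply])
  have hmu : mu σ T β ≤ i := mu_eq_firstExit σ T β ▸ firstExit_le hi0 hτ
  exact ⟨i - mu σ T β, by omega, by rw [Nat.sub_add_cancel hmu]⟩

lemma pow_nn_apply_notMem_tilde (h : ¬ orbit σ τ ⊆ tilde σ T) : (σ ^ nn σ T τ) τ ∉ tilde σ T :=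
  pow_firstExit_apply_notMem h

/-! ### Chains and the parity description of `T̃` -/

lemma subset_tilde (σ : Equiv.Perm B) (T : Set B) : T ⊆ tilde σ T := subset_union_left

lemma ncard_pow_apply_le (h : InjOn (fun i ↦ (σ ^ i) x) (Iio (m + 1))) :
    {y | ∃ i ≤ m, y = (σ ^ i) x}.ncard = m + 1 := by
  have himage : {y | ∃ i ≤ m, y = (σ ^ i) x} = (fun i ↦ (σ ^ i) x) '' Iio (m + 1) := by
    ext y
    simp only [mem_ofPred_eq, mem_image, mem_Iio, Nat.lt_succ_iff, eq_comm]
  rw [himage, h.ncard_image, ncard_Iio_nat]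

lemma mem_chainExt_iff (hx : x ∉ T) (hy : (σ⁻¹ ^ (m + 1)) y ∉ T)
    (hC : ∀ i ≤ m, (σ⁻¹ ^ i) y ∈ T) :
    x ∈ chainExt σ {z | ∃ i ≤ m, z = (σ⁻¹ ^ i) y} ↔ Even m ∧ x = (σ⁻¹ ^ (m + 1)) y := by
  have hcard : {z | ∃ i ≤ m, z = (σ⁻¹ ^ i) y}.ncard = m + 1 :=
    ncard_pow_apply_le (injOn_pow_apply_Iio fun i _ hi heq ↦
      hy (heq ▸ hC i (Nat.lt_succ_iff.1 hi)))
  have hxC : x ∉ {z | ∃ i ≤ m, z = (σ⁻¹ ^ i) y} := by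
    rintro ⟨i, hi, rfl⟩
    exact hx (hC i hi)
  have himage : x ∈ ⇑σ⁻¹ '' {z | ∃ i ≤ m, z = (σ⁻¹ ^ i) y} ↔ x = (σ⁻¹ ^ (m + 1)) y := by
    constructor
    · rintro ⟨_, ⟨i, hi, rfl⟩, rfl⟩
      rw [← Equiv.Perm.mul_apply, ← pow_succ'] at hx ⊢
      obtain rfl | hlt := hi.eq_or_lt
      · rfl
      · exact absurd (hC (i + 1) hlt) hx
    · rintro rfl
      exact ⟨_, ⟨m, le_rfl, rfl⟩, by rw [pow_succ', Equiv.Perm.mul_apply]⟩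
  have hodd : Odd (m + 1) ↔ Even m := by rw [Nat.odd_add_one, Nat.not_odd_iff_even]
  simp only [chainExt, hcard, hodd]
  split_ifs with hm
  · simp only [mem_union, hxC, himage, hm, false_or, true_and]
  · simp only [hxC, hm, false_and]

lemma mem_tilde_iff_exists_chain (hx : x ∉ T) :
    x ∈ tilde σ T ↔ ∃ m, Even m ∧ (σ ^ (m + 2)) x ∉ T ∧ ∀ i, 0 < i → i < m + 2 → (σ ^ i) x ∈ T := by
  have inv_pow_pow_apply : ∀ {a b : ℕ}, a ≤ b → (σ⁻¹ ^ a) ((σ ^ b) x) = (σ ^ (b - a)) x := by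
    intro a b hab
    rw [← Equiv.Perm.mul_apply, inv_pow, pow_sub σ hab, (Commute.pow_pow_self σ b a).inv_right.eq]
  simp only [tilde, mem_union, hx, false_or, mem_iUnion]
  constructor
  · rintro ⟨_, ⟨y, m, hσy, hy, hC, rfl⟩, hxC⟩
    obtain ⟨hm, hxy⟩ := (mem_chainExt_iff hx hy hC).1 hxC
    obtain rfl : y = (σ ^ (m + 1)) x := by
      rwa [eq_comm, inv_pow, Equiv.Perm.inv_eq_iff_eq] at hxy
    refine ⟨m, hm, by rwa [pow_succ', Equiv.Perm.mul_apply], fun i hi hlt ↦ ?_⟩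
    have := hC (m + 1 - i) (by omega)
    rwa [inv_pow_pow_apply (by omega), Nat.sub_sub_self (by omega)] at this
  · rintro ⟨m, hm, hexit, hmem⟩
    have hlast : (σ⁻¹ ^ (m + 1)) ((σ ^ (m + 1)) x) = x := by
      rw [inv_pow, Equiv.Perm.inv_eq_iff_eq]
    have hC : ∀ i ≤ m, (σ⁻¹ ^ i) ((σ ^ (m + 1)) x) ∈ T := by
      intro i hi
      rw [inv_pow_pow_apply (by omega)]
      exact hmem _ (by omega) (by omega)
    have hx' : (σ⁻¹ ^ (m + 1)) ((σ ^ (m + 1)) x) ∉ T := by rwa [hlast]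
    refine ⟨_, ⟨(σ ^ (m + 1)) x, m, ?_, hx', hC, rfl⟩,
      (mem_chainExt_iff hx hx' hC).2 ⟨hm, hlast.symm⟩⟩
    rwa [← Equiv.Perm.mul_apply, ← pow_succ']

lemma mem_tilde_iff (hx : x ∉ T) : x ∈ tilde σ T ↔ 0 < mu σ T x ∧ Even (mu σ T x) := by
  rw [mem_tilde_iff_exists_chain hx, mu_eq_firstExit]
  constructor
  · rintro ⟨m, hm, hexit, hmem⟩
    rw [firstExit_eq (by omega) hexit hmem]
    exact ⟨by omega, hm.add even_two⟩
  · rintro ⟨hpos, heven⟩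
    obtain ⟨m, hm⟩ := Nat.exists_eq_add_of_le' (Nat.le_of_dvd hpos heven.two_dvd)
    have horbit : ¬ orbit σ x ⊆ T := fun h ↦ hx (h (self_mem_orbit σ x))
    rw [hm] at heven
    refine ⟨m, (Nat.even_add.1 heven).2 even_two, hm ▸ pow_firstExit_apply_notMem horbit,
      fun i hi hlt ↦ pow_apply_mem_of_lt_firstExit hi (hm ▸ hlt)⟩

/-! ### The sign function -/

lemma epsT_of_notMem_tilde (hx : x ∉ tilde σ T) : epsT σ T x = 1 := by
  rw [epsT, if_neg fun h ↦ hx (subset_tilde σ T (h (self_mem_orbit σ x))), if_neg hx]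

lemma epsT_of_mem_tilde (hx : x ∉ T) (hx' : x ∈ tilde σ T) : epsT σ T x = -1 := by
  obtain ⟨hpos, heven⟩ := (mem_tilde_iff hx).1 hx'
  rw [epsT, if_neg fun h ↦ hx (h (self_mem_orbit σ x)), if_pos hx']
  exact (Nat.Even.sub_odd hpos heven odd_one).neg_one_pow

lemma epsT_mul_self (hx : x ∉ T) : epsT σ T x * epsT σ T x = 1 := by
  by_cases hx' : x ∈ tilde σ T
  · rw [epsT_of_mem_tilde hx hx', neg_one_mul, neg_neg]
  · rw [epsT_of_notMem_tilde hx', one_mul]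

lemma epsT_eq_neg_one_pow (h : ¬ orbit σ x ⊆ T) (hpos : 0 < mu σ T x) :
    epsT σ T x = (-1) ^ (mu σ T x - 1) := by
  by_cases hx : x ∈ tilde σ T
  · rw [epsT, if_neg h, if_pos hx]
  · have hodd : Odd (mu σ T x) := by
      rw [← Nat.not_even_iff_odd]
      exact fun heven ↦ hx ((mem_tilde_iff fun hT ↦ hx (subset_tilde σ T hT)).2 ⟨hpos, heven⟩)
    rw [epsT_of_notMem_tilde hx, (Nat.Odd.sub_odd hodd odd_one).neg_one_pow]

lemma epsT_apply_of_apply_mem (hz : σ z ∈ T) (h : ¬ orbit σ (σ z) ⊆ T) :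
    epsT σ T (σ z) = -epsT σ T z := by
  have horbit : ¬ orbit σ z ⊆ T := fun hsub ↦
    h fun _ ⟨n, hn⟩ ↦ hsub ⟨n + 1, by rw [pow_succ, Equiv.Perm.mul_apply, hn]⟩
  have hmu : mu σ T z = mu σ T (σ z) + 1 := by
    simpa only [mu_eq_firstExit] using firstExit_eq_firstExit_apply_add_one hz h
  have hpos : 0 < mu σ T (σ z) := by
    simpa only [mu_eq_firstExit] using firstExit_pos_of_mem hz h
  obtain ⟨k, hk⟩ := Nat.exists_eq_add_one_of_ne_zero hpos.ne'
  rw [epsT_eq_neg_one_pow h hpos, epsT_eq_neg_one_pow horbit (by omega), hmu, hk,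
    Nat.add_sub_cancel, Nat.add_sub_cancel, pow_succ, mul_neg_one, neg_neg]

/-! ### Sums over orbit segments -/

/-- The linear functional `κ ↦ ∑_{i < n} ε(σ^i x) p^i k_{σ^i x}`. It is `L^ε[x, σ^{n-1} x]` as long
as the points `x, σ x, …, σ^{n-1} x` are distinct, but it is indexed by the number `n` of its terms
and not by its last point. -/
def segmentSum (σ : Equiv.Perm B) (p : ℕ) (ε : B → ℚ) (x : B) (n : ℕ) : (B → ℚ) →ₗ[ℚ] ℚ :=
  ∑ i ∈ Finset.range n, (ε ((σ ^ i) x) * (p : ℚ) ^ i) • LinearMap.proj ((σ ^ i) x)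

section segmentSum

variable {p : ℕ} {ε : B → ℚ}

lemma segmentSum_apply (κ : B → ℚ) :
    segmentSum σ p ε x n κ =
      ∑ i ∈ Finset.range n, ε ((σ ^ i) x) * (p : ℚ) ^ i * κ ((σ ^ i) x) := by
  simp [segmentSum]

lemma steps0_pow_apply (h : InjOn (fun i ↦ (σ ^ i) x) (Iio (m + 1))) :
    steps0 σ x ((σ ^ m) x) = m := by
  have hle : steps0 σ x ((σ ^ m) x) ≤ m :=
    Nat.sInf_le (s := {n | (σ ^ n) x = (σ ^ m) x}) rfl
  exact h (Nat.lt_succ_of_le hle) (Nat.lt_succ_self m)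
    (Nat.sInf_mem (s := {n | (σ ^ n) x = (σ ^ m) x}) ⟨m, rfl⟩)

lemma Lfun_eq_segmentSum : Lfun σ p ε x y = segmentSum σ p ε x (steps0 σ x y + 1) := by
  funext κ
  rw [Lfun, segmentSum_apply]

lemma isLinearMap_Lfun : IsLinearMap ℚ (Lfun σ p ε x y) := by
  rw [Lfun_eq_segmentSum]
  exact LinearMap.isLinear _

lemma Lfun_pow_apply_eq_segmentSum (h : InjOn (fun i ↦ (σ ^ i) x) (Iio n)) (hn : 0 < n) :
    Lfun σ p ε x ((σ ^ (n - 1)) x) = segmentSum σ p ε x n := by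
  obtain ⟨m, rfl⟩ := Nat.exists_eq_add_one_of_ne_zero hn.ne'
  rw [Lfun_eq_segmentSum, Nat.add_sub_cancel, steps0_pow_apply h]

variable [DecidableEq B]

lemma segmentSum_e_pow_apply (h : InjOn (fun i ↦ (σ ^ i) x) (Iio n)) (hj : j < n) :
    segmentSum σ p ε x n (e ((σ ^ j) x)) = ε ((σ ^ j) x) * (p : ℚ) ^ j := by
  rw [segmentSum_apply, Finset.sum_eq_single_of_mem j (Finset.mem_range.2 hj)]
  · simp [e]
  · intro i hi hij
    have hne : (σ ^ i) x ≠ (σ ^ j) x := fun heq ↦ hij (h (Finset.mem_range.1 hi) hj heq)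
    simp [e, hne]

lemma segmentSum_e_eq_zero (h : ∀ i < n, (σ ^ i) x ≠ τ) : segmentSum σ p ε x n (e τ) = 0 := by
  rw [segmentSum_apply]
  exact Finset.sum_eq_zero fun i hi ↦ by simp [e, h i (Finset.mem_range.1 hi)]

lemma segmentSum_epsT_bsimple_eq_zero (hinj : InjOn (fun i ↦ (σ ^ i) x) (Iio n)) (hx : x ∉ T)
    (hn : (σ ^ n) x ∉ T) (hτ : τ ∈ T) : segmentSum σ p (epsT σ T) x n (bsimple σ p τ) = 0 := by
  obtain ⟨z, rfl⟩ := σ.surjective τ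
  rw [bsimple, Equiv.Perm.inv_eq_iff_eq.2 rfl, map_add, map_smul, smul_eq_mul]
  by_cases hz : ∃ j < n, (σ ^ j) x = z
  · obtain ⟨j, hj, rfl⟩ := hz
    have hsucc : σ ((σ ^ j) x) = (σ ^ (j + 1)) x := by rw [pow_succ', Equiv.Perm.mul_apply]
    have hj' : j + 1 < n := lt_of_le_of_ne hj fun heq ↦ hn (heq ▸ hsucc ▸ hτ)
    have horbit : ¬ orbit σ (σ ((σ ^ j) x)) ⊆ T := fun hsub ↦ hn (hsub ⟨n - (j + 1), by
      rw [hsucc, ← Equiv.Perm.mul_apply, ← pow_add, Nat.sub_add_cancel hj]⟩)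
    have hεsucc := epsT_apply_of_apply_mem hτ horbit
    rw [hsucc] at hεsucc ⊢
    rw [segmentSum_e_pow_apply hinj hj, segmentSum_e_pow_apply hinj hj', hεsucc]
    ring
  · push Not at hz
    have hσz : ∀ i < n, (σ ^ i) x ≠ σ z := by
      rintro (_ | i) hi heq
      · rw [← heq, pow_zero, Equiv.Perm.one_apply] at hτ
        exact hx hτ
      · rw [pow_succ', Equiv.Perm.mul_apply] at heq
        exact hz i (by omega) (σ.injective heq)
    rw [segmentSum_e_eq_zero hz, segmentSum_e_eq_zero hσz, mul_zero, add_zero]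

end segmentSum

/-! ### The functionals `L_{T,β}` as segment sums -/

section LT

variable {p : ℕ}

lemma LT_eq_segmentSum_of_mem_tilde (hβ : β ∉ T) (ht : β ∈ tilde σ T) :
    LT σ p T β = segmentSum σ p (epsT σ T) β (mu σ T β) := by
  have hpos := ((mem_tilde_iff hβ).1 ht).1
  rw [← Lfun_pow_apply_eq_segmentSum (injOn_pow_apply_Iio_mu hβ) hpos]
  funext κ
  rw [LT, if_pos ht]

lemma LT_eq_segmentSum_of_notMem_tilde (hper : β ∈ periodicPts σ) (ht : β ∉ tilde σ T) :
    LT σ p T β = segmentSum σ p (epsT σ T) ((σ ^ mu σ T β) β) (minimalPeriod σ β) := by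
  have hpos := minimalPeriod_pos_of_mem_periodicPts hper
  rw [← minimalPeriod_pow_apply hper (mu σ T β)] at hpos ⊢
  rw [← Lfun_pow_apply_eq_segmentSum (injOn_pow_apply_Iio_minimalPeriod σ _) hpos]
  funext κ
  rw [LT, if_neg ht, Lfun1]
  congr 1
  rw [Equiv.Perm.inv_eq_iff_eq, ← Equiv.Perm.mul_apply, ← pow_succ', Nat.sub_add_cancel hpos,
    pow_minimalPeriod_apply]

lemma isLinearMap_LT (σ : Equiv.Perm B) (p : ℕ) (T : Set B) (β : B) :
    IsLinearMap ℚ (LT σ p T β) := by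
  unfold LT
  split_ifs
  · exact isLinearMap_Lfun
  · exact isLinearMap_Lfun

variable [DecidableEq B]

lemma LT_bsimple_eq_zero (hper : β ∈ periodicPts σ) (hβ : β ∉ T) (hτ : τ ∈ T) :
    LT σ p T β (bsimple σ p τ) = 0 := by
  have hexit : (σ ^ mu σ T β) β ∉ T := by
    rw [mu_eq_firstExit]
    exact pow_firstExit_apply_notMem fun h ↦ hβ (h (self_mem_orbit σ β))
  by_cases ht : β ∈ tilde σ T
  · rw [LT_eq_segmentSum_of_mem_tilde hβ ht]
    exact segmentSum_epsT_bsimple_eq_zero (injOn_pow_apply_Iio_mu hβ) hβ hexit hτ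
  · rw [LT_eq_segmentSum_of_notMem_tilde hper ht, ← minimalPeriod_pow_apply hper (mu σ T β)]
    exact segmentSum_epsT_bsimple_eq_zero (injOn_pow_apply_Iio_minimalPeriod σ _) hexit
      (by rwa [pow_minimalPeriod_apply]) hτ

lemma gvec_eq_sub (hτ : τ ∉ T) (h : ¬ orbit σ τ ⊆ tilde σ T) :
    gvec σ p T τ =
      (epsT σ T τ * (p : ℚ) ^ nn σ T τ) • e τ - e ((σ ^ nn σ T τ) τ) := by
  rw [gvec, if_neg hτ, if_neg h]
  split_ifs with ht
  · rw [epsT_of_mem_tilde hτ ht, fB]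
    module
  · rw [epsT_of_notMem_tilde ht, fH]
    module

lemma LT_gvec_eq_sub (hτ : τ ∉ T)
    (h : ¬ orbit σ τ ⊆ tilde σ T) :
    LT σ p T β (gvec σ p T τ) =
      epsT σ T τ * (p : ℚ) ^ nn σ T τ * LT σ p T β (e τ) - LT σ p T β (e ((σ ^ nn σ T τ) τ)) := by
  rw [gvec_eq_sub hτ h, (isLinearMap_LT σ p T β).map_sub, (isLinearMap_LT σ p T β).map_smul,
    smul_eq_mul]

lemma LT_gvec_eq_neg (hτ : τ ∉ T)
    (h : orbit σ τ ⊆ tilde σ T) : LT σ p T β (gvec σ p T τ) = -LT σ p T β (e τ) := by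
  rw [gvec, if_neg hτ, if_pos h, (isLinearMap_LT σ p T β).map_neg]

/-! ### The case `β ∈ T̃` -/

lemma LT_e_self_of_mem_tilde (hβ : β ∉ T) (ht : β ∈ tilde σ T) : LT σ p T β (e β) = -1 := by
  have := segmentSum_e_pow_apply (p := p) (ε := epsT σ T) (injOn_pow_apply_Iio_mu hβ)
    ((mem_tilde_iff hβ).1 ht).1
  rw [LT_eq_segmentSum_of_mem_tilde hβ ht]
  simpa only [pow_zero, Equiv.Perm.one_apply, mul_one, epsT_of_mem_tilde hβ ht] using this

lemma LT_e_eq_zero_of_mem_tilde (hβ : β ∉ T) (ht : β ∈ tilde σ T) (hτ : τ ∉ T) (hne : τ ≠ β) :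
    LT σ p T β (e τ) = 0 := by
  rw [LT_eq_segmentSum_of_mem_tilde hβ ht, mu_eq_firstExit]
  refine segmentSum_e_eq_zero fun i hi heq ↦ ?_
  obtain rfl | hpos := Nat.eq_zero_or_pos i
  · exact hne heq.symm
  · exact hτ (heq ▸ pow_apply_mem_of_lt_firstExit hpos hi)

lemma LT_gvec_self_pos_of_mem_tilde (hp : 0 < p) (hβ : β ∉ T) (ht : β ∈ tilde σ T) :
    0 < LT σ p T β (gvec σ p T β) := by
  by_cases h : orbit σ β ⊆ tilde σ T
  · rw [LT_gvec_eq_neg hβ h, LT_e_self_of_mem_tilde hβ ht, neg_neg]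
    exact one_pos
  · have hexit := pow_nn_apply_notMem_tilde h
    rw [LT_gvec_eq_sub hβ h, LT_e_self_of_mem_tilde hβ ht, epsT_of_mem_tilde hβ ht,
      LT_e_eq_zero_of_mem_tilde hβ ht (fun hT ↦ hexit (subset_tilde σ T hT))
        (ne_of_mem_of_not_mem ht hexit).symm]
    have : (0 : ℚ) < p ^ nn σ T β := by positivity
    linarith

lemma LT_gvec_eq_zero_of_mem_tilde (hβ : β ∉ T) (ht : β ∈ tilde σ T) (hτ : τ ∉ T)
    (hne : τ ≠ β) : LT σ p T β (gvec σ p T τ) = 0 := by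
  by_cases h : orbit σ τ ⊆ tilde σ T
  · rw [LT_gvec_eq_neg hτ h, LT_e_eq_zero_of_mem_tilde hβ ht hτ hne, neg_zero]
  · have hexit := pow_nn_apply_notMem_tilde h
    rw [LT_gvec_eq_sub hτ h, LT_e_eq_zero_of_mem_tilde hβ ht hτ hne,
      LT_e_eq_zero_of_mem_tilde hβ ht (fun hT ↦ hexit (subset_tilde σ T hT))
        (ne_of_mem_of_not_mem ht hexit).symm, mul_zero, sub_zero]

/-! ### The case `β ∉ T̃` -/

lemma LT_e_pow_add_mu (hper : β ∈ periodicPts σ) (ht : β ∉ tilde σ T)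
    (hj : j < minimalPeriod σ β) :
    LT σ p T β (e ((σ ^ (j + mu σ T β)) β)) = epsT σ T ((σ ^ (j + mu σ T β)) β) * (p : ℚ) ^ j := by
  rw [LT_eq_segmentSum_of_notMem_tilde hper ht, pow_add, Equiv.Perm.mul_apply]
  rw [← minimalPeriod_pow_apply hper (mu σ T β)] at hj ⊢
  exact segmentSum_e_pow_apply (injOn_pow_apply_Iio_minimalPeriod σ _) hj

lemma LT_e_pow_add_mu_of_notMem_tilde (hper : β ∈ periodicPts σ) (ht : β ∉ tilde σ T)
    (hj : j < minimalPeriod σ β) (h : (σ ^ (j + mu σ T β)) β ∉ tilde σ T) :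
    LT σ p T β (e ((σ ^ (j + mu σ T β)) β)) = (p : ℚ) ^ j := by
  rw [LT_e_pow_add_mu hper ht hj, epsT_of_notMem_tilde h, one_mul]

lemma LT_e_eq_zero_of_not_sameCycle (hper : β ∈ periodicPts σ) (ht : β ∉ tilde σ T)
    (h : ¬ σ.SameCycle β τ) : LT σ p T β (e τ) = 0 := by
  rw [LT_eq_segmentSum_of_notMem_tilde hper ht]
  refine segmentSum_e_eq_zero fun i _ heq ↦ h ?_
  rw [← heq, Equiv.Perm.sameCycle_pow_right, Equiv.Perm.sameCycle_pow_right]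

lemma LT_gvec_self_pos_of_notMem_tilde (hp : 1 < p) (hper : β ∈ periodicPts σ)
    (ht : β ∉ tilde σ T) : 0 < LT σ p T β (gvec σ p T β) := by
  have hβ : β ∉ T := fun h ↦ ht (subset_tilde σ T h)
  have horbit : ¬ orbit σ β ⊆ tilde σ T := fun h ↦ ht (h (self_mem_orbit σ β))
  have hreturn : (σ ^ minimalPeriod σ β) β ∉ tilde σ T := by rwa [pow_minimalPeriod_apply]
  have hperiod := minimalPeriod_pos_of_mem_periodicPts hper
  have hnn : nn σ T β ≤ minimalPeriod σ β := firstExit_le hperiod hreturn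
  have hexit := pow_nn_apply_notMem_tilde horbit
  have hmu := mu_pos hper hβ
  have hmu_nn : mu σ T β ≤ nn σ T β := by
    rw [mu_eq_firstExit]
    exact firstExit_le (firstExit_pos hperiod hreturn) fun h ↦ hexit (subset_tilde σ T h)
  obtain ⟨d, hd⟩ := Nat.exists_eq_add_of_le' hmu_nn
  obtain ⟨k, hk⟩ := Nat.exists_eq_add_of_le' (mu_le_minimalPeriod hper hβ)
  have hself := LT_e_pow_add_mu_of_notMem_tilde (p := p) (j := k) hper ht (by omega)
    (by rwa [← hk])
  have hnext := LT_e_pow_add_mu_of_notMem_tilde (p := p) (j := d) hper ht (by omega)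
    (by rwa [← hd])
  rw [← hk, pow_minimalPeriod_apply] at hself
  rw [← hd] at hnext
  rw [LT_gvec_eq_sub hβ horbit, hself, hnext, epsT_of_notMem_tilde ht, one_mul, ← pow_add,
    sub_pos]
  exact pow_lt_pow_right₀ (mod_cast hp) (by omega)

lemma LT_e_pow_nn_of_notMem_tilde (hper : β ∈ periodicPts σ) (ht : β ∉ tilde σ T) (hτ : τ ∉ T)
    (hne : τ ≠ β) (horbit : ¬ orbit σ τ ⊆ tilde σ T) :
    LT σ p T β (e ((σ ^ nn σ T τ) τ)) =
      epsT σ T τ * (p : ℚ) ^ nn σ T τ * LT σ p T β (e τ) := by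
  by_cases hcycle : σ.SameCycle β τ
  · obtain ⟨j, hj, rfl⟩ := exists_pow_add_mu_apply_eq hper hτ hne hcycle
    set τ := (σ ^ (j + mu σ T β)) β with hτ_def
    have hmu := mu_pos hper fun h ↦ ht (subset_tilde σ T h)
    have hreturn : (σ ^ (minimalPeriod σ β - (j + mu σ T β))) τ = β := by
      rw [hτ_def, ← Equiv.Perm.mul_apply, ← pow_add, Nat.sub_add_cancel hj.le,
        pow_minimalPeriod_apply]
    have hnn : nn σ T τ ≤ minimalPeriod σ β - (j + mu σ T β) :=
      firstExit_le (by omega) (by rwa [hreturn])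
    have hnext : (σ ^ (nn σ T τ + j + mu σ T β)) β = (σ ^ nn σ T τ) τ := by
      rw [hτ_def, add_assoc, pow_add, Equiv.Perm.mul_apply]
    have hexit := pow_nn_apply_notMem_tilde horbit
    rw [← hnext] at hexit ⊢
    rw [LT_e_pow_add_mu_of_notMem_tilde hper ht (by omega) hexit,
      LT_e_pow_add_mu hper ht (by omega), ← hτ_def, pow_add]
    linear_combination (-(p : ℚ) ^ nn σ T τ * (p : ℚ) ^ j) * epsT_mul_self hτ
  · have hcycle' : ¬ σ.SameCycle β ((σ ^ nn σ T τ) τ) := by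
      rwa [Equiv.Perm.sameCycle_pow_right]
    rw [LT_e_eq_zero_of_not_sameCycle hper ht hcycle,
      LT_e_eq_zero_of_not_sameCycle hper ht hcycle', mul_zero]

lemma LT_gvec_eq_zero_of_notMem_tilde (hper : β ∈ periodicPts σ) (ht : β ∉ tilde σ T)
    (hτ : τ ∉ T) (hne : τ ≠ β) : LT σ p T β (gvec σ p T τ) = 0 := by
  by_cases horbit : orbit σ τ ⊆ tilde σ T
  · have hcycle : ¬ σ.SameCycle β τ := fun h ↦ by
      obtain ⟨j, hj, rfl⟩ := exists_pow_add_mu_apply_eq hper hτ hne h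
      refine ht (horbit ⟨minimalPeriod σ β - (j + mu σ T β), ?_⟩)
      rw [← Equiv.Perm.mul_apply, ← pow_add, Nat.sub_add_cancel hj.le, pow_minimalPeriod_apply]
    rw [LT_gvec_eq_neg hτ horbit, LT_e_eq_zero_of_not_sameCycle hper ht hcycle, neg_zero]
  · rw [LT_gvec_eq_sub hτ horbit, LT_e_pow_nn_of_notMem_tilde hper ht hτ hne horbit,
      sub_self]

end LT

end GO

theorem statement4_general {B : Type*} [DecidableEq B] {σ : Equiv.Perm B} {p : ℕ} (hp : 1 < p)
    {T : Set B} {β : B} (hβ : β ∉ T) (hper : β ∈ Function.periodicPts σ) :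
    0 < GO.LT σ p T β (GO.gvec σ p T β) ∧
    ∀ τ : B, τ ≠ β → GO.LT σ p T β (GO.gvec σ p T τ) = 0 := by
  constructor
  · by_cases ht : β ∈ GO.tilde σ T
    · exact GO.LT_gvec_self_pos_of_mem_tilde (Nat.zero_lt_of_lt hp) hβ ht
    · exact GO.LT_gvec_self_pos_of_notMem_tilde hp hper ht
  · intro τ hne
    by_cases hτ : τ ∈ T
    · rw [GO.gvec, if_pos hτ, GO.LT_bsimple_eq_zero hper hβ hτ]
    · by_cases ht : β ∈ GO.tilde σ T
      · exact GO.LT_gvec_eq_zero_of_mem_tilde hβ ht hτ hne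
      · exact GO.LT_gvec_eq_zero_of_notMem_tilde hper ht hτ hne

/-- For every `T ⊆ 𝔹` and `β ∈ 𝔹 − T`: `L_{T,β}(g_β) > 0`, and
`L_{T,β}(g_τ) = 0` for every `τ ≠ β`. -/
theorem statement4 {B : Type*} [Fintype B] [DecidableEq B] [Nonempty B]
    (σ : Equiv.Perm B) (p : ℕ) (hp : p.Prime) (T : Set B) (β : B) (hβ : β ∉ T) :
    0 < GO.LT σ p T β (GO.gvec σ p T β) ∧
    ∀ τ : B, τ ≠ β → GO.LT σ p T β (GO.gvec σ p T τ) = 0 :=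
  statement4_general hp.one_lt hβ (σ.injective.mem_periodicPts β)
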